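/- Let A be a domain of characteristic p > 0 and B a subring of A containing A^p, and assume A is finitely generated as a B-algebra. For elements f_1,…,f_m ∈ A the following are all equivalent: (1) f_1,…,f_m form a p-basis over B of the ring of constants of some B-derivation of A; (2) f_1,…,f_m are p-independent over B and B[f_1,…,f_m] is the ring of constants of some B-derivation of A; (3) f_1,…,f_m are p-independent over B and C_B(f_1,…,f_m) = B[f_1,…,f_m]; (4) f_1,…,f_m form a p-basis of C_B(f_1,…,f_m) over B. -/

import Mathlib

/-- The monomial `f₁^{α₁} ⋯ f_m^{α_m}` for a multi-index `α ∈ Ω_m` (all exponents `< p`). -/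
def pMonomial {S : Type*} [CommRing S] {m p : ℕ} (f : Fin m → S) (α : Fin m → Fin p) : S :=
  ∏ i, f i ^ (α i : ℕ)

/-- `f₁, …, f_m` are `p`-independent over the subring `B`. -/
def pIndependent {S : Type*} [CommRing S] (B : Subring S) {m : ℕ} (p : ℕ) (f : Fin m → S) : Prop :=
  ∀ b : (Fin m → Fin p) → S, (∀ α, b α ∈ B) →
    ∑ α : Fin m → Fin p, b α * pMonomial f α = 0 → ∀ α, b α = 0

/-- `f₁, …, f_m` form a `p`-basis of `R` over `B`. -/
def IsPBasis {S : Type*} [CommRing S] (B : Subring S) (R : Set S) {m : ℕ} (p : ℕ)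
    (f : Fin m → S) : Prop :=
  (↑B ⊆ R) ∧ (∀ α : Fin m → Fin p, pMonomial f α ∈ R) ∧ pIndependent B p f ∧
    ∀ r ∈ R, ∃ b : (Fin m → Fin p) → S, (∀ α, b α ∈ B) ∧
      r = ∑ α : Fin m → Fin p, b α * pMonomial f α

/-- An element is `B`-free if it has no noninvertible factor from `B`. -/
def BFree {S : Type*} [CommRing S] (B : Subring S) (a : S) : Prop :=
  ∀ b ∈ B, b ∣ a → IsUnit b

/-- `C_B(f₁,…,f_m) = B₀(f₁,…,f_m) ∩ A`: those elements of `A` lying in the field of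
fractions of `B[f₁,…,f_m]`. -/
def CB {S : Type*} [CommRing S] (B : Subring S) {m : ℕ} (f : Fin m → S) : Set S :=
  {a | ∃ s t : S, s ∈ Subring.closure (↑B ∪ Set.range f) ∧
      t ∈ Subring.closure (↑B ∪ Set.range f) ∧ s ≠ 0 ∧ a * s = t}

/-- A `B`-derivation of `A`: additive, satisfies the Leibniz rule, and vanishes on `B`. -/
def IsBDerivation {S : Type*} [CommRing S] (B : Subring S) (d : S → S) : Prop :=
  (∀ x y, d (x + y) = d x + d y) ∧ (∀ x y, d (x * y) = x * d y + y * d x) ∧ ∀ b ∈ B, d b = 0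

open Polynomial in
theorem exists_polyDer {K M : Type*} [Field K] [Field M] [Algebra K M] (D : Derivation K M M) (u : M) :
    ∃ E : Derivation K M[X] M[X], ∀ P i, (E P).coeff i = D (P.coeff i) + P.coeff (i+1) * (i+1) * u := by
  refine ⟨(PolynomialModule.equivPolynomialSelf.compDer D.mapCoeffs) +
    (C u) • (Polynomial.derivative' (R := M)).restrictScalars K, fun P i => ?_⟩
  have : (PolynomialModule.equivPolynomial (D.mapCoeffs P)).coeff i = D (P.coeff i) := rfl
  simp [coeff_derivative, this]
  ring

open Polynomial in
theorem step {K M N : Type*} [Field K] [Field M] [Field N] [Algebra K M] [Algebra M N] [Algebra K N]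
    [IsScalarTower K M N] [FiniteDimensional K M] (p : ℕ) (hp : p.Prime) [CharP M p]
    (x : N) (a : K) (hx : x ^ p = algebraMap K N a) (hxM : ∀ b : M, algebraMap M N b ≠ x)
    (hsurj : Function.Surjective (aeval (R := M) x))
    (D : Derivation K M M) (hD : ∀ y, D y = 0 → ∃ k, algebraMap K M k = y) :
    ∃ D' : Derivation K N N, ∀ y, D' y = 0 → ∃ k, algebraMap K N k = y := by
  have : CharP N p := charP_of_injective_algebraMap (algebraMap M N).injective p
  have : Fact p.Prime := ⟨hp⟩
  obtain ⟨u, hu⟩ : ∃ u, ∀ y, D y ≠ u := by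
    by_contra! h
    have h1 : Function.Injective (D : M →ₗ[K] M) := LinearMap.injective_iff_surjective.2 h
    have h2 : (1 : M) = 0 := h1 (by simp)
    exact one_ne_zero h2
  obtain ⟨E, hE⟩ := exists_polyDer D u
  have hirr : Irreducible (X ^ p - C (algebraMap K M a)) := by
    apply X_pow_sub_C_irreducible_of_prime hp
    intro b hb
    apply hxM b
    apply frobenius_inj N p
    simp only [frobenius_def]
    rw [hx, ← map_pow, hb, ← IsScalarTower.algebraMap_apply]
  have hmin : minpoly M x = X ^ p - C (algebraMap K M a) := by
    symm
    apply minpoly.eq_of_irreducible_of_monic hirr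
    · simp [hx, ← IsScalarTower.algebraMap_apply]
    · exact monic_X_pow_sub_C _ hp.ne_zero
  have hEm : E (minpoly M x) = 0 := by
    rw [hmin]
    have h1 : (C (algebraMap K M a) : M[X]) = algebraMap K M[X] a := rfl
    rw [h1, map_sub, E.map_algebraMap, Derivation.leibniz_pow]
    simp
  have hdeg : (minpoly M x).natDegree = p := by rw [hmin]; exact natDegree_X_pow_sub_C
  have hmon : (minpoly M x).Monic := by rw [hmin]; exact monic_X_pow_sub_C _ hp.ne_zero
  let φ : M[X] →ₐ[K] N := (aeval (R := M) x).restrictScalars K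
  have hφ : Function.Surjective φ := hsurj
  have hd : ∀ P, φ P = 0 → φ (E P) = 0 := by
    intro P hP
    obtain ⟨Q, rfl⟩ := minpoly.dvd M x (show aeval x P = 0 from hP)
    rw [Derivation.leibniz, hEm]
    simp [φ]
  refine ⟨Derivation.liftOfSurjective hφ hd, fun y hy => ?_⟩
  obtain ⟨P0, rfl⟩ := hφ y
  obtain ⟨P, hPd, hPe⟩ : ∃ P : M[X], P.natDegree < p ∧ φ P = φ P0 := by
    refine ⟨P0 %ₘ minpoly M x, ?_, ?_⟩
    · rw [← hdeg]
      apply natDegree_modByMonic_lt _ hmon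
      intro h; rw [h] at hdeg; simp at hdeg; exact hp.ne_zero hdeg.symm
    · exact Polynomial.aeval_modByMonic_eq_self_of_root (minpoly.aeval M x)
  rw [← hPe] at hy ⊢
  rw [Derivation.liftOfSurjective_apply] at hy
  have hEP : E P = 0 := by
    apply eq_zero_of_dvd_of_natDegree_lt (minpoly.dvd M x (show aeval x (E P) = 0 from hy))
    rw [hdeg]
    refine lt_of_le_of_lt ?_ hPd
    rw [natDegree_le_iff_coeff_eq_zero]
    intro i hi
    rw [hE, coeff_eq_zero_of_natDegree_lt hi, coeff_eq_zero_of_natDegree_lt (by lia)]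
    simp
  have hc : ∀ i : ℕ, D (P.coeff i) + P.coeff (i+1) * (i+1) * u = 0 := by
    intro i; rw [← hE, hEP, coeff_zero]
  have hn : P.natDegree = 0 := by
    by_contra hn
    obtain ⟨n, hn'⟩ := Nat.exists_eq_succ_of_ne_zero hn
    have h1 := hc (n+1)
    rw [coeff_eq_zero_of_natDegree_lt (n := n+1+1) (by lia)] at h1
    obtain ⟨k, hk⟩ := hD (P.coeff (n+1)) (by simpa using h1)
    have hk0 : P.coeff (n+1) ≠ 0 := by
      have : P.leadingCoeff ≠ 0 := by
        rw [Ne, leadingCoeff_eq_zero]; rintro rfl; simp at hn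
      rwa [leadingCoeff, hn'] at this
    have hk1 : k ≠ 0 := by rintro rfl; simp at hk; exact hk0 hk.symm
    have hnp : ((n : M) + 1) ≠ 0 := by
      intro h
      have : ((n + 1 : ℕ) : M) = 0 := by exact_mod_cast h
      rw [CharP.cast_eq_zero_iff M p] at this
      have := Nat.le_of_dvd (by lia) this
      lia
    have hnK : ((n : K) + 1) ≠ 0 := by
      intro h; apply hnp
      have := congrArg (algebraMap K M) h
      simpa using this
    apply hu ((-(k * (n+1))⁻¹ : K) • P.coeff n)
    rw [D.map_smul, eq_neg_of_add_eq_zero_left (hc n), ← hk, Algebra.smul_def]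
    have : algebraMap K M k ≠ 0 := by rwa [hk]
    simp
    field_simp
  rw [eq_C_of_natDegree_eq_zero hn]
  have h0 := hc 0
  rw [coeff_eq_zero_of_natDegree_lt (n := 0+1) (by lia)] at h0
  obtain ⟨k, hk⟩ := hD (P.coeff 0) (by simpa using h0)
  exact ⟨k, by simp [φ, ← hk, ← IsScalarTower.algebraMap_apply]⟩

open IntermediateField in
theorem exists_der {K L : Type*} [Field K] [Field L] [Algebra K L] [FiniteDimensional K L]
    (p : ℕ) (hp : p.Prime) [CharP L p] (h : ∀ x : L, ∃ a, algebraMap K L a = x ^ p) :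
    ∃ D : Derivation K L L, ∀ y, D y = 0 → ∃ k, algebraMap K L k = y := by
  have key : ∀ E : IntermediateField K L,
      ∃ D : Derivation K E E, ∀ y, D y = 0 → ∃ k, algebraMap K E k = y := by
    apply induction_on_adjoin
    · refine ⟨0, fun y _ => ?_⟩
      obtain ⟨k, hk⟩ := mem_bot.1 y.2
      exact ⟨k, Subtype.ext hk⟩
    · rintro E x ⟨D, hD⟩
      by_cases hx : x ∈ E
      · have : E⟮x⟯.restrictScalars K = E := by
          have : E⟮x⟯ = ⊥ := adjoin_simple_eq_bot_iff.2 (mem_bot.2 ⟨⟨x, hx⟩, rfl⟩)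
          rw [this, restrictScalars_bot_eq_self]
        rw [this]
        exact ⟨D, hD⟩
      · obtain ⟨a, ha⟩ := h x
        have : CharP E p := ((algebraMap E L).charP_iff (algebraMap E L).injective p).2 inferInstance
        refine step (K := K) (M := E) (N := E⟮x⟯) p hp (AdjoinSimple.gen E x) a ?_ ?_ ?_ D hD
        · apply Subtype.ext
          exact ha.symm
        · intro b hb
          apply hx
          have := congrArg Subtype.val hb
          rw [AdjoinSimple.coe_gen] at this
          rw [← this]
          exact b.2
        · intro y
          have hy := y.2
          have hint : IsAlgebraic E x := Algebra.IsAlgebraic.isAlgebraic x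
          rw [← mem_toSubalgebra, adjoin_simple_toSubalgebra_of_isAlgebraic hint,
            Algebra.adjoin_singleton_eq_range_aeval] at hy
          obtain ⟨P, hP⟩ := hy
          refine ⟨P, Subtype.ext ?_⟩
          rw [AdjoinSimple.coe_aeval_gen_apply]
          exact hP
  obtain ⟨D, hD⟩ := key ⊤
  let e : (⊤ : IntermediateField K L) ≃ₐ[K] L := topEquiv
  refine ⟨Derivation.liftOfSurjective (f := e) e.surjective (d := D) (fun x hx => ?_), fun y hy => ?_⟩
  · have : x = 0 := by simpa using hx
    simp [this]
  · obtain ⟨z, rfl⟩ := e.surjective y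
    rw [Derivation.liftOfSurjective_apply] at hy
    obtain ⟨k, rfl⟩ := hD z (by simpa using hy)
    exact ⟨k, by simp⟩

theorem pMonomial_mem {A : Type*} [CommRing A] {p : ℕ} (B : Subring A) {m : ℕ} (f : Fin m → A)
    (α : Fin m → Fin p) : pMonomial f α ∈ Subring.closure (↑B ∪ Set.range f) :=
  Subring.prod_mem _ fun i _ =>
    pow_mem (Subring.subset_closure (Or.inr ⟨i, rfl⟩) :
      f i ∈ Subring.closure (↑B ∪ Set.range f)) _

/-- every element of `B[f]` is a `B`-combination of the `p`-monomials -/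
theorem exists_repr {A : Type*} [CommRing A] (p : ℕ) (hp : 1 < p) (B : Subring A)
    (hB : ∀ a : A, a ^ p ∈ B) {m : ℕ} (f : Fin m → A) (r : A)
    (hr : r ∈ Subring.closure (↑B ∪ Set.range f)) :
    ∃ b : (Fin m → Fin p) → A, (∀ α, b α ∈ B) ∧ r = ∑ α : Fin m → Fin p, b α * pMonomial f α := by
  classical
  have : NeZero p := ⟨by lia⟩
  let V : Submodule B A := Submodule.span B (Set.range (pMonomial (p := p) f))
  have hmono : ∀ e : Fin m → ℕ, ∏ i, f i ^ e i ∈ V := by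
    intro e
    have h1 : ∏ i, f i ^ e i =
        (⟨∏ i, (f i ^ (e i / p)) ^ p, Subring.prod_mem _ fun i _ => hB _⟩ : B) •
          pMonomial f (fun i => (⟨e i % p, Nat.mod_lt _ (by lia)⟩ : Fin p)) := by
      rw [Subring.smul_def, smul_eq_mul, pMonomial, ← Finset.prod_mul_distrib]
      refine Finset.prod_congr rfl fun i _ => ?_
      rw [← pow_mul, ← pow_add, Nat.div_add_mod']
    rw [h1]
    exact V.smul_mem _ (Submodule.subset_span ⟨_, rfl⟩)
  have h1 : (1 : A) ∈ V := by simpa using hmono 0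
  have hmul : ∀ x ∈ V, ∀ y ∈ V, x * y ∈ V := by
    intro x hx y hy
    have : V * V ≤ V := by
      rw [Submodule.span_mul_span, Submodule.span_le]
      rintro _ ⟨_, ⟨α, rfl⟩, _, ⟨β, rfl⟩, rfl⟩
      have := hmono (fun i => (α i : ℕ) + β i)
      simpa [pMonomial, pow_add, Finset.prod_mul_distrib] using this
    exact this (Submodule.mul_mem_mul hx hy)
  have hV : r ∈ V := by
    induction hr using Subring.closure_induction with
    | mem x hx =>
      rcases hx with hx | ⟨i, rfl⟩
      · simpa [Subring.smul_def] using V.smul_mem (⟨x, hx⟩ : B) h1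
      · have := hmono (Pi.single i 1)
        rwa [Finset.prod_eq_single i (by intro j _ hj; simp [hj]) (by simp), Pi.single_eq_same,
          pow_one] at this
    | zero => exact V.zero_mem
    | one => exact h1
    | add x y _ _ hx hy => exact V.add_mem hx hy
    | neg x _ hx => exact V.neg_mem hx
    | mul x y _ _ hx hy => exact hmul x hx y hy
  obtain ⟨c, hc⟩ := (Submodule.mem_span_range_iff_exists_fun B).1 hV
  exact ⟨fun α => c α, fun α => (c α).2, by rw [← hc]; rfl⟩

theorem repr_mem {A : Type*} [CommRing A] {p : ℕ} (B : Subring A) {m : ℕ} (f : Fin m → A)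
    (b : (Fin m → Fin p) → A) (hb : ∀ α, b α ∈ B) :
    ∑ α : Fin m → Fin p, b α * pMonomial f α ∈ Subring.closure (↑B ∪ Set.range f) :=
  Subring.sum_mem _ fun α _ => Subring.mul_mem _ (Subring.subset_closure (Or.inl (hb α)))
    (pMonomial_mem B f α)

/-- the ring of constants -/
def constRing {A : Type*} [CommRing A] {B : Subring A} {d : A → A} (hd : IsBDerivation B d) :
    Subring A where
  carrier := {a | d a = 0}
  mul_mem' {x y} hx hy := by
    simp only [Set.mem_ofPred_eq] at *
    rw [hd.2.1, hx, hy]; simp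
  one_mem' := hd.2.2 _ B.one_mem
  add_mem' {x y} hx hy := by
    simp only [Set.mem_ofPred_eq] at *
    rw [hd.1, hx, hy]; simp
  zero_mem' := hd.2.2 _ B.zero_mem
  neg_mem' {x} hx := by
    simp only [Set.mem_ofPred_eq] at *
    have h1 : d (-1) = 0 := hd.2.2 _ (B.neg_mem B.one_mem)
    rw [← neg_one_mul, hd.2.1, hx, h1]; simp

theorem exists_BDer {A : Type*} [CommRing A] [IsDomain A] (p : ℕ) (hp : p.Prime) [CharP A p]
    (B : Subring A) (hB : ∀ a : A, a ^ p ∈ B)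
    (hfg : ∃ s : Finset A, Subring.closure ((B : Set A) ∪ (s : Set A)) = ⊤)
    {m : ℕ} (f : Fin m → A) :
    ∃ d : A → A, IsBDerivation B d ∧ {a | d a = 0} = CB B f := by
  classical
  obtain ⟨s, hs⟩ := hfg
  let L := FractionRing A
  let ι : A →+* L := algebraMap A L
  have hι : Function.Injective ι := IsFractionRing.injective A L
  have : CharP L p := charP_of_injective_ringHom hι p
  let R := Subring.closure (↑B ∪ Set.range f)
  have hBR : ∀ b ∈ B, b ∈ R := fun b hb => Subring.subset_closure (Or.inl hb)
  let K : Subfield L := Subfield.closure (R.map ι : Set L)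
  have hRK : ∀ r ∈ R, ι r ∈ K := fun r hr => Subfield.subset_closure ⟨r, hr, rfl⟩
  have hK : ∀ a : A, ι a ∈ K ↔ a ∈ CB B f := by
    intro a
    constructor
    · intro ha
      obtain ⟨y, hy, z, hz, hyz⟩ := Subfield.mem_closure_iff.1 ha
      rw [Subring.closure_eq] at hy hz
      obtain ⟨t, ht, rfl⟩ := hy
      obtain ⟨u, hu, rfl⟩ := hz
      by_cases hu0 : u = 0
      · subst hu0
        simp only [map_zero, div_zero] at hyz
        have : a = 0 := hι (by rw [← hyz, map_zero])
        subst this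
        exact ⟨1, 0, R.one_mem, R.zero_mem, one_ne_zero, by simp⟩
      · refine ⟨u, t, hu, ht, hu0, hι ?_⟩
        have : ι u ≠ 0 := by rwa [Ne, map_eq_zero_iff ι hι]
        rw [map_mul, ← hyz, div_mul_cancel₀ _ this]
    · rintro ⟨u, t, hu, ht, hu0, h⟩
      have h0 : ι u ≠ 0 := by rwa [Ne, map_eq_zero_iff ι hι]
      have : ι a = ι t / ι u := by rw [eq_div_iff h0, ← map_mul, h]
      rw [this]
      exact K.div_mem (hRK _ ht) (hRK _ hu)
  have hpow : ∀ x : L, ∃ a : K, algebraMap K L a = x ^ p := by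
    intro x
    obtain ⟨a, b, hb, rfl⟩ := IsFractionRing.div_surjective (A := A) x
    exact ⟨⟨_, K.div_mem (hRK _ (hBR _ (hB a))) (hRK _ (hBR _ (hB b)))⟩, by
      rw [div_pow, ← map_pow, ← map_pow]; rfl⟩
  have hint : ∀ x : L, IsIntegral K x := by
    intro x
    obtain ⟨a, ha⟩ := hpow x
    exact IsIntegral.of_pow hp.pos (by rw [← ha]; exact isIntegral_algebraMap)
  have htop : IntermediateField.adjoin K (ι '' (s : Set A)) = ⊤ := by
    rw [eq_top_iff]
    intro x _
    have hA : ∀ a : A, ι a ∈ IntermediateField.adjoin K (ι '' (s : Set A)) := by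
      intro a
      have ha : a ∈ Subring.closure ((B : Set A) ∪ (s : Set A)) := by rw [hs]; trivial
      have hle : Subring.closure ((B : Set A) ∪ (s : Set A)) ≤
          (IntermediateField.adjoin K (ι '' (s : Set A))).toSubfield.toSubring.comap ι := by
        rw [Subring.closure_le]
        rintro b (hb | hb)
        · exact (IntermediateField.adjoin K (ι '' (s : Set A))).algebraMap_mem
            ⟨ι b, hRK b (hBR b hb)⟩
        · exact IntermediateField.subset_adjoin K _ ⟨b, hb, rfl⟩
      exact hle ha
    obtain ⟨a, b, hb, rfl⟩ := IsFractionRing.div_surjective (A := A) x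
    exact div_mem (hA a) (hA b)
  have hfin : FiniteDimensional K L := by
    have : Finite (ι '' (s : Set A)) := (s.finite_toSet.image ι)
    have h := IntermediateField.finiteDimensional_adjoin (K := K) (S := ι '' (s : Set A))
      (fun x _ => hint x)
    rw [htop] at h
    exact Module.Finite.equiv (IntermediateField.topEquiv (F := K) (E := L)).toLinearEquiv
  obtain ⟨D, hD⟩ := exists_der (K := K) (L := L) p hp hpow
  have hDK : ∀ x : L, D x = 0 ↔ x ∈ K := by
    intro x
    constructor
    · intro h
      obtain ⟨k, rfl⟩ := hD x h
      exact k.2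
    · intro h
      exact D.map_algebraMap ⟨x, h⟩
  obtain ⟨c, hc⟩ := IsLocalization.exist_integer_multiples (nonZeroDivisors A) s
    (fun a => D (ι a))
  have hc0 : ι c ≠ 0 := by
    rw [Ne, map_eq_zero_iff ι hι]; exact nonZeroDivisors.ne_zero c.2
  have hall : ∀ a : A, ∃ a' : A, ι a' = ι c * D (ι a) := by
    intro a
    have ha : a ∈ Subring.closure ((B : Set A) ∪ (s : Set A)) := by rw [hs]; trivial
    induction ha using Subring.closure_induction with
    | mem x hx =>
      rcases hx with hx | hx
      · exact ⟨0, by rw [(hDK _).2 (hRK x (hBR x hx))]; simp⟩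
      · obtain ⟨y, hy⟩ := hc x hx
        exact ⟨y, by rw [← Algebra.smul_def]; exact hy⟩
    | zero => exact ⟨0, by simp⟩
    | one => exact ⟨0, by simp⟩
    | add x y _ _ hx hy =>
      obtain ⟨x', hx⟩ := hx
      obtain ⟨y', hy⟩ := hy
      exact ⟨x' + y', by simp only [map_add, hx, hy, mul_add]⟩
    | neg x _ hx =>
      obtain ⟨x', hx⟩ := hx
      exact ⟨-x', by rw [map_neg, map_neg, map_neg, hx]; ring⟩
    | mul x y _ _ hx hy =>
      obtain ⟨x', hx⟩ := hx
      obtain ⟨y', hy⟩ := hy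
      exact ⟨x * y' + y * x', by
        simp only [map_add, map_mul, hx, hy, Derivation.leibniz, smul_eq_mul]; ring⟩
  choose d hd using hall
  have hd0 : ∀ a, d a = 0 ↔ ι a ∈ K := by
    intro a
    rw [← hDK, ← map_eq_zero_iff ι hι, hd, mul_eq_zero, or_iff_right hc0]
  refine ⟨d, ⟨fun x y => hι ?_, fun x y => hι ?_, fun b hb => ?_⟩, ?_⟩
  · simp only [map_add, hd, mul_add]
  · simp only [map_add, map_mul, hd, Derivation.leibniz, smul_eq_mul]; ring
  · exact (hd0 b).2 (hRK b (hBR b hb))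
  · ext a
    rw [Set.mem_ofPred_eq, hd0, hK]

/-- **Lemma 1 (finitely generated case).** If `A` is finitely generated as a `B`-algebra, then
the four conditions (1)–(4) are all equivalent. -/
theorem pBasis_conditions_tfae_of_fg
    {A : Type*} [CommRing A] [IsDomain A] (p : ℕ) (hp : 0 < p) [CharP A p]
    (B : Subring A) (hB : ∀ a : A, a ^ p ∈ B)
    (hfg : ∃ s : Finset A, Subring.closure ((B : Set A) ∪ (s : Set A)) = ⊤)
    {m : ℕ} (f : Fin m → A) :
    List.TFAE [
      -- (1)
      (∃ d : A → A, IsBDerivation B d ∧ IsPBasis B {a | d a = 0} p f),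
      -- (2)
      (pIndependent B p f ∧ ∃ d : A → A, IsBDerivation B d ∧
        {a | d a = 0} = ↑(Subring.closure (↑B ∪ Set.range f))),
      -- (3)
      (pIndependent B p f ∧ CB B f = ↑(Subring.closure (↑B ∪ Set.range f))),
      -- (4)
      IsPBasis B (CB B f) p f] := by
  have hpp : p.Prime := CharP.char_prime_of_ne_zero A hp.ne'
  have hRC : ∀ r ∈ Subring.closure (↑B ∪ Set.range f), r ∈ CB B f := fun r hr =>
    ⟨1, r, Subring.one_mem _, hr, one_ne_zero, by simp⟩
  have h12 : (∃ d : A → A, IsBDerivation B d ∧ IsPBasis B {a | d a = 0} p f) →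
      (pIndependent B p f ∧ ∃ d : A → A, IsBDerivation B d ∧
        {a | d a = 0} = ↑(Subring.closure (↑B ∪ Set.range f))) := by
    rintro ⟨d, hd, h1, h2, h3, h4⟩
    refine ⟨h3, d, hd, Set.Subset.antisymm ?_ ?_⟩
    · intro r hr
      obtain ⟨b, hb, rfl⟩ := h4 r hr
      exact repr_mem B f b hb
    · have : Subring.closure (↑B ∪ Set.range f) ≤ constRing hd := by
        rw [Subring.closure_le]
        rintro _ (hb | ⟨i, rfl⟩)
        · exact h1 hb
        · have hm := h2 (fun j => if j = i then ⟨1, hpp.one_lt⟩ else ⟨0, hpp.pos⟩)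
          rw [pMonomial, Finset.prod_eq_single i (by intro j _ hj; simp [hj]) (by simp)] at hm
          have hm2 : d (f i) = 0 := by simpa using hm
          exact hm2
      exact this
  have h23 : (pIndependent B p f ∧ ∃ d : A → A, IsBDerivation B d ∧
        {a | d a = 0} = ↑(Subring.closure (↑B ∪ Set.range f))) →
      (pIndependent B p f ∧ CB B f = ↑(Subring.closure (↑B ∪ Set.range f))) := by
    rintro ⟨h1, d, hd, h2⟩
    refine ⟨h1, Set.Subset.antisymm ?_ hRC⟩
    rintro a ⟨s, t, hs, ht, hs0, rfl⟩
    have h3 : ∀ x, x ∈ Subring.closure (↑B ∪ Set.range f) ↔ d x = 0 := fun x => by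
      have := Set.ext_iff.1 h2 x
      exact this.symm
    rw [SetLike.mem_coe, h3]
    rw [h3] at hs ht
    rw [hd.2.1, hs] at ht
    simpa [hs0] using ht
  have h34 : (pIndependent B p f ∧ CB B f = ↑(Subring.closure (↑B ∪ Set.range f))) →
      IsPBasis B (CB B f) p f := by
    rintro ⟨h1, h2⟩
    refine ⟨fun b hb => hRC b (Subring.subset_closure (Or.inl hb)),
      fun α => hRC _ (pMonomial_mem B f α), h1, fun r hr => ?_⟩
    rw [h2] at hr
    exact exists_repr p hpp.one_lt B hB f r hr
  have h41 : IsPBasis B (CB B f) p f →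
      (∃ d : A → A, IsBDerivation B d ∧ IsPBasis B {a | d a = 0} p f) := by
    intro h
    obtain ⟨d, hd, he⟩ := exists_BDer p hpp B hB hfg f
    exact ⟨d, hd, by rwa [he]⟩
  tfae_have 1 → 2 := h12
  tfae_have 2 → 3 := h23
  tfae_have 3 → 4 := h34
  tfae_have 4 → 1 := h41
  tfae_finish
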